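/- Spatial error of the time reconstruction, third time derivative (Lemma 4.3 with ℓ = 3): assume all values of V lie in the closed subspace F. Then sup_{t ∈ [t₀,t₁]} ‖ρ₀ · (Û − PÛ)'''(t)‖_H ≤ c₃(q;3) · τ⁻² · ‖ρ₀ · P^⊥ w₀‖_H, where c₃(q;3) = 4√2 · q(q+1) · 2√3 · (q+1)² = 8√6 · q(q+1)³. -/

import Mathlib

open scoped RealInnerProductSpace
open MeasureTheory

/-- Evaluation of the `H`-valued polynomial with coefficients `c` (degree at most `k`):
`t ↦ ∑_{i=0}^{k} tⁱ • c i`. -/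
noncomputable def polyEval {H : Type*} [NormedAddCommGroup H] [NormedSpace ℝ H]
    (k : ℕ) (c : ℕ → H) (t : ℝ) : H :=
  ∑ i ∈ Finset.range (k + 1), t ^ i • c i

/-- Coefficients of the termwise derivative of the polynomial with coefficients `c`. -/
noncomputable def dC {H : Type*} [NormedAddCommGroup H] [NormedSpace ℝ H]
    (c : ℕ → H) : ℕ → H := fun i => ((i : ℝ) + 1) • c (i + 1)

/-- `u` is the coefficient function of the time reconstruction `Û` (degree at most `q+1`)
of the polynomial `V` with coefficients `v` (degree at most `q`), with jump `j`, on `[t₀, t₁]`. -/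
def IsTimeRecon {H : Type*} [NormedAddCommGroup H] [InnerProductSpace ℝ H]
    (t₀ t₁ : ℝ) (q : ℕ) (v : ℕ → H) (j : H) (u : ℕ → H) : Prop :=
  (∀ i, q + 1 < i → u i = 0) ∧
  (∀ w : ℕ → H, (∀ i, q ≤ i → w i = 0) →
    (∫ t in t₀..t₁,
        ⟪polyEval (q + 1) (dC (dC u)) t - polyEval (q + 1) (dC (dC v)) t,
          polyEval (q + 1) w t⟫) = ⟪j, polyEval (q + 1) w t₀⟫) ∧
  polyEval (q + 1) u t₀ = polyEval (q + 1) v t₀ ∧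
  polyEval (q + 1) (dC u) t₀ = polyEval (q + 1) (dC v) t₀ - j

/-- `P` is the orthogonal projection of the Hilbert space `H` onto the closed subspace `F`. -/
def IsOrthProj {H : Type*} [NormedAddCommGroup H] [InnerProductSpace ℝ H]
    (F : Submodule ℝ H) (P : H →L[ℝ] H) : Prop :=
  ∀ x : H, P x ∈ F ∧ ∀ y ∈ F, ⟪x - P x, y⟫ = 0


section scalar
open Polynomial

/-- Integral over `[0,1]` as a linear functional on polynomials. -/
noncomputable def polyInt : ℝ[X] →ₗ[ℝ] ℝ where
  toFun p := ∫ s in (0:ℝ)..1, p.eval s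
  map_add' p r := by
    simp only [eval_add]
    exact intervalIntegral.integral_add (p.continuous.intervalIntegrable _ _)
      (r.continuous.intervalIntegrable _ _)
  map_smul' a p := by
    simp only [eval_smul, RingHom.id_apply, smul_eq_mul]
    exact intervalIntegral.integral_const_mul _ _

lemma polyInt_apply (p : ℝ[X]) : polyInt p = ∫ s in (0:ℝ)..1, p.eval s := rfl

lemma polyInt_derivative (p : ℝ[X]) : polyInt (derivative p) = p.eval 1 - p.eval 0 := by
  rw [polyInt_apply]
  exact intervalIntegral.integral_eq_sub_of_hasDerivAt (fun x _ => p.hasDerivAt x)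
    ((derivative p).continuous.intervalIntegrable _ _)

lemma polyInt_C_mul (a : ℝ) (p : ℝ[X]) : polyInt (C a * p) = a * polyInt p := by
  rw [C_mul', map_smul, smul_eq_mul]

lemma poly_eq_zero_of_polyInt (E : ℝ[X]) (h : polyInt (X * E * E) = 0) : E = 0 := by
  rw [polyInt_apply] at h
  have hc : Continuous fun s : ℝ => (X * E * E).eval s := (X * E * E).continuous
  have hnn : ∀ s ∈ Set.Ioc (0:ℝ) 1, 0 ≤ (X * E * E).eval s := by
    intro s hs
    simp only [eval_mul, eval_X]
    nlinarith [mul_nonneg hs.1.le (mul_self_nonneg (E.eval s))]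
  have hz : ∀ s ∈ Set.Ioo (0:ℝ) 1, E.eval s = 0 := by
    intro s hs
    by_contra hne
    have hpos : 0 < ∫ s in (0:ℝ)..1, (X * E * E).eval s := by
      refine intervalIntegral.integral_pos one_pos hc.continuousOn hnn ⟨s, ⟨hs.1.le, hs.2.le⟩, ?_⟩
      simp only [eval_mul, eval_X]
      have := mul_pos hs.1 (mul_self_pos.mpr hne)
      linarith
    linarith
  refine Polynomial.eq_zero_of_infinite_isRoot E (Set.Infinite.mono ?_ (Set.Ioo_infinite (zero_lt_one (α := ℝ))))
  intro s hs
  exact hz s hs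

lemma natDegree_S (r : ℝ[X]) (m : ℕ) (hr : r.natDegree ≤ m) (a : ℝ) :
    (X * derivative (derivative r) - X * (X * derivative (derivative r)) + C 2 * derivative r
      - C 3 * (X * derivative r) + C a * r).natDegree ≤ m := by
  rw [natDegree_le_iff_coeff_eq_zero] at *
  intro N hN
  obtain ⟨k, rfl⟩ : ∃ k, N = k + 1 := ⟨N - 1, by omega⟩
  simp only [coeff_add, coeff_sub, coeff_C_mul, coeff_X_mul, coeff_derivative]
  rw [hr (k+1) hN, hr (k+1+1) (by omega)]
  rcases k with _ | k
  · simp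
  · simp [coeff_X_mul, coeff_derivative, hr (k+1+1) hN]

lemma natDegree_E (r : ℝ[X]) (m : ℕ) (hr : r.natDegree ≤ m + 1) :
    (X * derivative (derivative r) - X * (X * derivative (derivative r)) + C 2 * derivative r
      - C 3 * (X * derivative r) + C (((m:ℝ)+1)*((m:ℝ)+3)) * r).natDegree ≤ m := by
  rw [natDegree_le_iff_coeff_eq_zero] at *
  intro N hN
  obtain ⟨k, rfl⟩ : ∃ k, N = k + 1 := ⟨N - 1, by omega⟩
  simp only [coeff_add, coeff_sub, coeff_C_mul, coeff_X_mul, coeff_derivative]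
  rw [hr (k+1+1) (by omega)]
  by_cases hk : k = m
  · subst hk
    rcases k with _ | k
    · simp
    · simp [coeff_X_mul, coeff_derivative]
      ring
  · rw [hr (k+1) (by omega)]
    rcases k with _ | k
    · simp
    · simp [coeff_X_mul, coeff_derivative, hr (k+1+1) (by omega)]

lemma kernel_ode (m : ℕ) (K : ℝ[X]) (hd : K.natDegree ≤ m + 1)
    (hK : ∀ r : ℝ[X], r.natDegree ≤ m + 1 → polyInt (K * r) = r.eval 0) :
    X * derivative (derivative K) - X * (X * derivative (derivative K)) + C 2 * derivative K
      - C 3 * (X * derivative K) + C (((m:ℝ)+1)*((m:ℝ)+3)) * K = 0 := by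
  set c : ℝ := ((m:ℝ)+1)*((m:ℝ)+3) with hc
  set E : ℝ[X] := X * derivative (derivative K) - X * (X * derivative (derivative K))
    + C 2 * derivative K - C 3 * (X * derivative K) + C c * K with hE
  have hEd : E.natDegree ≤ m := natDegree_E K m hd
  apply poly_eq_zero_of_polyInt
  have hX : ∀ S : ℝ[X], S.natDegree ≤ m → polyInt (K * (X * S)) = 0 := by
    intro S hS
    rw [hK _ ((natDegree_mul_le).trans (by rw [natDegree_X]; omega))]
    simp
  have h2 : (C (2:ℝ) : ℝ[X]) = 2 := rfl
  have h3 : (C (3:ℝ) : ℝ[X]) = 3 := rfl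
  have key : X * E * E = derivative (X^2 * (1 - X) * derivative K * E)
      - derivative (K * (X^2 * (1-X) * derivative E))
      + K * (X * (X * derivative (derivative E) - X * (X * derivative (derivative E))
        + C 2 * derivative E - C 3 * (X * derivative E) + C 0 * E))
      + C c * (K * (X * E)) := by
    have : X * E = derivative (X^2 * (1 - X) * derivative K) + C c * (X * K) := by
      rw [hE, h2, h3]
      simp only [derivative_mul, derivative_sub, derivative_X_pow, derivative_X, derivative_one]
      simp [h2]
      ring
    refine (congrArg (· * E) this).trans ?_
    rw [h2, h3]
    simp only [derivative_mul, derivative_sub, derivative_X_pow, derivative_X, derivative_one]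
    simp [h2]
    ring
  rw [key, map_add, map_add, map_sub, polyInt_derivative, polyInt_derivative, polyInt_C_mul,
    hX _ hEd, hX _ (natDegree_S E m hEd 0)]
  simp

lemma kernel_bound (m : ℕ) (K : ℝ[X]) (hd : K.natDegree ≤ m + 1)
    (hK : ∀ r : ℝ[X], r.natDegree ≤ m + 1 → polyInt (K * r) = r.eval 0)
    (s : ℝ) (hs : s ∈ Set.Icc (0:ℝ) 1) :
    |(derivative K).eval s| ≤ ((m:ℝ)+1)*((m:ℝ)+3)*((m:ℝ)+2)^2/2 := by
  have ode := kernel_ode m K hd hK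
  set c : ℝ := ((m:ℝ)+1)*((m:ℝ)+3) with hc
  have hm : (0:ℝ) ≤ m := Nat.cast_nonneg m
  have h2 : (C (2:ℝ) : ℝ[X]) = 2 := rfl
  have h3 : (C (3:ℝ) : ℝ[X]) = 3 := rfl
  have ode0 : 2 * (derivative K).eval 0 + c * K.eval 0 = 0 := by
    simpa using congrArg (eval (0:ℝ)) ode
  have ode1 : - (derivative K).eval 1 + c * K.eval 1 = 0 := by
    have := congrArg (eval (1:ℝ)) ode
    simp at this
    linarith
  have hKK := hK K hd
  -- first identity
  have hdK : (derivative K).natDegree ≤ m := (natDegree_derivative_le K).trans (by omega)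
  have hXd : (X * derivative K).natDegree ≤ m + 1 :=
    natDegree_mul_le.trans (by rw [natDegree_X]; omega)
  have i1 := hK (X * derivative K) hXd
  have i2 := hK (derivative K) (by omega)
  have e1 : polyInt (derivative (X * K * K)) = K.eval 1 ^ 2 := by
    rw [polyInt_derivative]; simp; ring
  have e1' : polyInt (derivative (X * K * K)) = K.eval 0 + 2 * 0 := by
    have : derivative (X * K * K) = K * K + C 2 * (K * (X * derivative K)) := by
      simp [h2]; ring
    rw [this, map_add, polyInt_C_mul, i1, hKK]; simp
  have e2 : polyInt (derivative (K * K)) = K.eval 1 ^ 2 - K.eval 0 ^ 2 := by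
    rw [polyInt_derivative]; simp; ring
  have e2' : polyInt (derivative (K * K)) = 2 * (derivative K).eval 0 := by
    have : derivative (K * K) = C 2 * (K * derivative K) := by
      simp [h2]; ring
    rw [this, polyInt_C_mul, i2]
  have hone := hK 1 (by simp)
  have hK0ne : K.eval 0 ≠ 0 := by
    intro h0
    have h1 : K.eval 1 = 0 := by
      have : K.eval 1 ^ 2 = 0 := by linarith
      simpa using this
    have : polyInt (K * K) = 0 := by rw [hKK, h0]
    have hXK : polyInt (derivative (X * K)) = 0 := by rw [polyInt_derivative]; simp [h1]
    have hzero : polyInt (X * K * K) = 0 := by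
      have hA : polyInt (K * K) - polyInt (X * K * K) = polyInt ((1 - X) * K * K) := by
        rw [← map_sub]; congr 1; ring
      have hB : 0 ≤ polyInt (X * K * K) := by
        rw [polyInt_apply]
        refine intervalIntegral.integral_nonneg zero_le_one fun x hx => ?_
        simp only [eval_mul, eval_X]
        nlinarith [mul_nonneg hx.1 (mul_self_nonneg (K.eval x))]
      have hC : 0 ≤ polyInt ((1 - X) * K * K) := by
        rw [polyInt_apply]
        refine intervalIntegral.integral_nonneg zero_le_one fun x hx => ?_
        simp only [eval_mul, eval_X, eval_sub, eval_one]
        nlinarith [mul_nonneg (sub_nonneg.2 hx.2) (mul_self_nonneg (K.eval x))]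
      linarith
    have hKz := poly_eq_zero_of_polyInt K hzero
    rw [hKz] at hone
    simp at hone
  have hK0 : K.eval 0 = ((m:ℝ)+2)^2 := by
    have : K.eval 0 * (K.eval 0 - ((m:ℝ)+2)^2) = 0 := by
      have : ((m:ℝ)+2)^2 = c + 1 := by rw [hc]; ring
      rw [this]; nlinarith
    rcases mul_eq_zero.1 this with h | h
    · exact absurd h hK0ne
    · linarith
  have hK1 : K.eval 1 ^ 2 = ((m:ℝ)+2)^2 := by linarith
  set B : ℝ := c * ((m:ℝ)+2)^2/2 with hB
  have hcpos : 0 < c := by positivity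
  have hBpos : 0 < B := by positivity
  have hz0 : (derivative K).eval 0 ^ 2 = B ^ 2 := by
    have : (derivative K).eval 0 = - B := by rw [hB, ← hK0]; linarith
    rw [this]; ring
  have hz1 : (derivative K).eval 1 ^ 2 ≤ B ^ 2 := by
    have : (derivative K).eval 1 = c * K.eval 1 := by linarith
    rw [this, mul_pow, hK1, ← mul_pow]
    apply pow_le_pow_left₀ (by positivity)
    rw [hB]
    have : (2:ℝ) * ((m:ℝ)+2) ≤ ((m:ℝ)+2)^2 := by nlinarith
    nlinarith
  apply abs_le_of_sq_le_sq _ hBpos.le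
  rcases Nat.eq_zero_or_pos m with rfl | hmpos
  · have hconst : derivative K = C ((derivative K).coeff 0) :=
      eq_C_of_natDegree_le_zero hdK
    rw [hconst] at hz0 ⊢
    simp only [eval_C] at hz0 ⊢
    exact hz0.le
  -- energy
  set z := derivative K with hz
  set l : ℝ := (m:ℝ) * ((m:ℝ)+4) with hl
  have hlpos : 0 < l := by
    have : (0:ℝ) < m := by exact_mod_cast hmpos
    positivity
  have ode' : ∀ x : ℝ, x * (1 - x) * (derivative (derivative z)).eval x
      = - (3 - 5 * x) * (derivative z).eval x - l * z.eval x := by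
    intro x
    have := congrArg (fun p => (derivative p).eval x) ode
    simp at this
    rw [hl]
    rw [hc] at this
    linarith
  set f : ℝ[X] := C l * z ^ 2 + X * (1 - X) * (derivative z) ^ 2 with hf
  have hf' : ∀ x, (derivative f).eval x = (8 * x - 5) * (derivative z).eval x ^ 2 := by
    intro x
    have : (derivative f).eval x = 2 * l * z.eval x * (derivative z).eval x
        + (1 - 2 * x) * (derivative z).eval x ^ 2
        + 2 * (derivative z).eval x * (x * (1 - x) * (derivative (derivative z)).eval x) := by
      rw [hf]; simp [pow_two]; ring
    rw [this, ode']; ring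
  have hfle : f.eval s ≤ l * B ^ 2 := by
    have f0 : f.eval 0 = l * z.eval 0 ^ 2 := by simp [hf]
    have f1 : f.eval 1 = l * z.eval 1 ^ 2 := by simp [hf]
    rcases le_total s (5/8) with h | h
    · have anti : AntitoneOn (fun x => f.eval x) (Set.Icc (0:ℝ) (5/8)) := by
        apply antitoneOn_of_deriv_nonpos (convex_Icc _ _) f.continuous.continuousOn
          f.differentiable.differentiableOn
        intro x hx
        rw [interior_Icc] at hx
        rw [Polynomial.deriv, hf']
        exact mul_nonpos_of_nonpos_of_nonneg (by linarith [hx.2]) (sq_nonneg _)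
      have := anti (Set.mem_Icc.2 ⟨le_rfl, by norm_num⟩) (Set.mem_Icc.2 ⟨hs.1, h⟩) hs.1
      simp only at this
      rw [f0, hz0] at this
      exact this
    · have mono : MonotoneOn (fun x => f.eval x) (Set.Icc (5/8:ℝ) 1) := by
        apply monotoneOn_of_deriv_nonneg (convex_Icc _ _) f.continuous.continuousOn
          f.differentiable.differentiableOn
        intro x hx
        rw [interior_Icc] at hx
        rw [Polynomial.deriv, hf']
        exact mul_nonneg (by linarith [hx.1]) (sq_nonneg _)
      have := mono (Set.mem_Icc.2 ⟨h, hs.2⟩) (Set.mem_Icc.2 ⟨by norm_num, le_rfl⟩) hs.2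
      simp only at this
      rw [f1] at this
      exact this.trans (mul_le_mul_of_nonneg_left hz1 hlpos.le)
  have hge : l * z.eval s ^ 2 ≤ f.eval s := by
    rw [hf]; simp
    exact mul_nonneg (mul_nonneg hs.1 (sub_nonneg.2 hs.2)) (sq_nonneg _)
  exact le_of_mul_le_mul_left (hge.trans hfle) hlpos

lemma kernel_bound' (m : ℕ) (t₀ t₁ : ℝ) (h01 : t₀ < t₁) (k : ℝ[X]) (hd : k.natDegree ≤ m + 1)
    (hk : ∀ r : ℝ[X], r.natDegree ≤ m + 1 → ∫ t in t₀..t₁, k.eval t * r.eval t = r.eval t₀)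
    (t : ℝ) (ht : t ∈ Set.Icc t₀ t₁) :
    |(derivative k).eval t| ≤
      ((m:ℝ)+1)*((m:ℝ)+3)*((m:ℝ)+2)^2/2 * ((t₁ - t₀)⁻¹)^2 := by
  have hτ : 0 < t₁ - t₀ := sub_pos.2 h01
  set τ := t₁ - t₀ with hτd
  set A : ℝ[X] := C τ * X + C t₀ with hA
  have hAd : A.natDegree ≤ 1 := natDegree_linear_le
  set A' : ℝ[X] := C τ⁻¹ * X + C (- τ⁻¹ * t₀) with hA'
  have hAd' : A'.natDegree ≤ 1 := natDegree_linear_le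
  have hcomp : ∀ (p A : ℝ[X]), A.natDegree ≤ 1 → p.natDegree ≤ m + 1 →
      (p.comp A).natDegree ≤ m + 1 := by
    intro p A hA hp
    calc _ ≤ p.natDegree * A.natDegree := natDegree_comp_le
      _ ≤ (m+1) * 1 := Nat.mul_le_mul hp hA
      _ = m + 1 := mul_one _
  have hKd : (C τ * k.comp A).natDegree ≤ m + 1 :=
    (natDegree_C_mul_le _ _).trans (hcomp k A hAd hd)
  have := kernel_bound m (C τ * k.comp A) hKd ?_ (τ⁻¹ * (t - t₀)) ?_
  · have h1 : (derivative (C τ * k.comp A)).eval (τ⁻¹ * (t - t₀))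
        = τ ^ 2 * (derivative k).eval t := by
      rw [derivative_C_mul, derivative_comp, eval_mul, eval_mul, eval_comp]
      have h2 : A.eval (τ⁻¹ * (t - t₀)) = t := by
        simp [hA]; field_simp; ring
      rw [h2]; simp [hA]; ring
    rw [h1, abs_mul, abs_of_pos (by positivity : (0:ℝ) < τ^2)] at this
    rw [inv_pow, ← div_eq_mul_inv, le_div_iff₀ (by positivity)]
    linarith
  · intro r hr
    have h1 := hk (r.comp A') (hcomp r A' hAd' hr)
    have h2 : (r.comp A').eval t₀ = r.eval 0 := by
      rw [eval_comp]; congr 1; simp [hA']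
    rw [h2] at h1
    rw [← h1, polyInt_apply]
    have h3 := intervalIntegral.smul_integral_comp_mul_add
      (fun t => k.eval t * (r.comp A').eval t) τ t₀ (a := 0) (b := 1)
    have h4 : τ * 1 + t₀ = t₁ := by rw [hτd]; ring
    rw [h4, mul_zero, zero_add] at h3
    rw [← h3, smul_eq_mul, ← intervalIntegral.integral_const_mul]
    congr 1
    ext x
    have h5 : A'.eval (τ * x + t₀) = x := by simp [hA']; field_simp; ring
    rw [eval_comp, h5]
    simp [eval_comp, hA]
    ring
  · constructor
    · exact mul_nonneg (inv_nonneg.2 hτ.le) (sub_nonneg.2 ht.1)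
    · rw [inv_mul_le_iff₀ hτ]; rw [hτd]; linarith [ht.2]

end scalar

section vector
variable {H : Type*} [NormedAddCommGroup H] [InnerProductSpace ℝ H]
open Polynomial

lemma polyEval_continuous (k : ℕ) (c : ℕ → H) : Continuous (polyEval k c) := by
  unfold polyEval; fun_prop

lemma polyEval_map (k : ℕ) (c : ℕ → H) (L : H →L[ℝ] H) (t : ℝ) :
    L (polyEval k c t) = polyEval k (fun i => L (c i)) t := by
  simp [polyEval, map_sum]

/-- The scalar polynomial with given coefficients. -/
noncomputable def scalPoly (k : ℕ) (a : ℕ → ℝ) : ℝ[X] :=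
  ∑ i ∈ Finset.range (k + 1), C (a i) * X ^ i

lemma scalPoly_eval (k : ℕ) (a : ℕ → ℝ) (t : ℝ) :
    (scalPoly k a).eval t = ∑ i ∈ Finset.range (k + 1), t ^ i * a i := by
  simp only [scalPoly, eval_finsetSum, eval_mul, eval_C, eval_pow, eval_X]
  exact Finset.sum_congr rfl fun i _ => mul_comm _ _

lemma scalPoly_coeff (k : ℕ) (a : ℕ → ℝ) (n : ℕ) :
    (scalPoly k a).coeff n = if n ≤ k then a n else 0 := by
  simp [scalPoly, finsetSum_coeff, coeff_C_mul, coeff_X_pow, Nat.lt_succ_iff]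

lemma polyEval_smul (k : ℕ) (a : ℕ → ℝ) (e : H) (t : ℝ) :
    polyEval k (fun i => a i • e) t = (scalPoly k a).eval t • e := by
  rw [scalPoly_eval, Finset.sum_smul]
  simp [polyEval, smul_smul]

lemma coeff_zero_of_polyEval (k : ℕ) (c : ℕ → H) (S : Set ℝ) (hS : S.Infinite)
    (h : ∀ t ∈ S, polyEval k c t = 0) (n : ℕ) (hn : n ≤ k) : c n = 0 := by
  have h0 : scalPoly k (fun i => ⟪c i, c n⟫) = 0 := by
    refine Polynomial.eq_zero_of_infinite_isRoot _ (hS.mono ?_)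
    intro t ht
    have := congrArg (fun x => ⟪x, c n⟫) (h t ht)
    simp only [polyEval, sum_inner, real_inner_smul_left, inner_zero_left] at this
    show (scalPoly k (fun i => ⟪c i, c n⟫)).eval t = 0
    rw [scalPoly_eval]; exact this
  have := congrArg (fun p => p.coeff n) h0
  simp only [scalPoly_coeff, if_pos hn, coeff_zero] at this
  exact inner_self_eq_zero.1 this

/-- The algebraic core: after projecting, the third derivative is a scalar multiple of `P^⊥ w₀`. -/
lemma core (F : Submodule ℝ H) (P : H →L[ℝ] H) (hP : IsOrthProj F P)
    (t₀ t₁ : ℝ) (h01 : t₀ < t₁) (q : ℕ) (hq : 2 ≤ q)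
    (v : ℕ → H) (hv : ∀ i, q < i → v i = 0)
    (hvF : ∀ t : ℝ, polyEval (q + 1) v t ∈ F)
    (w₀ : H) (u : ℕ → H)
    (hu : IsTimeRecon t₀ t₁ q v (polyEval (q + 1) (dC v) t₀ - w₀) u) (t : ℝ)
    (ht : t ∈ Set.Icc t₀ t₁) :
    ∃ a : ℝ, polyEval (q + 1) (dC (dC (dC u))) t - P (polyEval (q + 1) (dC (dC (dC u))) t)
        = a • (w₀ - P w₀) ∧
      |a| ≤ ((q:ℝ)-1)*((q:ℝ)+1)*(q:ℝ)^2/2 * ((t₁ - t₀)⁻¹)^2 := by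
  set Q : H →L[ℝ] H := ContinuousLinearMap.id ℝ H - P with hQ
  have hQa : ∀ x, Q x = x - P x := fun x => rfl
  have hQF : ∀ x ∈ F, Q x = 0 := by
    intro x hx
    have h1 : Q x ∈ F := F.sub_mem hx (hP x).1
    have h2 := (hP x).2 (Q x) h1
    rw [← hQa] at h2
    exact inner_self_eq_zero.1 h2
  have hQs : ∀ x y, ⟪x, Q y⟫ = ⟪Q x, y⟫ := by
    intro x y
    have h1 : ⟪Q x, P y⟫ = 0 := (hP x).2 _ (hP y).1
    have h2 : ⟪Q y, P x⟫ = 0 := (hP y).2 _ (hP x).1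
    have h3 : ⟪x, Q y⟫ = ⟪Q x, Q y⟫ := by
      have : x = Q x + P x := by rw [hQa]; abel
      conv_lhs => rw [this]
      rw [inner_add_left, real_inner_comm (Q y) (P x), h2, add_zero]
    have h4 : ⟪Q x, y⟫ = ⟪Q x, Q y⟫ := by
      have : y = Q y + P y := by rw [hQa]; abel
      conv_lhs => rw [this]
      rw [inner_add_right, h1, add_zero]
    rw [h3, h4]
  have hQv : ∀ i, Q (v i) = 0 := by
    intro i
    by_cases hi : i ≤ q + 1
    · refine coeff_zero_of_polyEval (q+1) (fun i => Q (v i)) Set.univ Set.infinite_univ ?_ i hi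
      intro t _
      rw [← polyEval_map]
      exact hQF _ (hvF t)
    · rw [hv i (by omega), map_zero]
  obtain ⟨hu0, hu1, -, -⟩ := hu
  set e := w₀ - P w₀ with he
  set c : ℕ → H := fun i => Q (dC (dC u) i) with hc
  have hcz : ∀ i, q ≤ i → c i = 0 := by
    intro i hi
    simp only [hc, dC]
    rw [hu0 _ (by omega)]; simp
  -- the projected weak equation
  have hweak : ∀ w : ℕ → H, (∀ i, q ≤ i → w i = 0) →
      ∫ t in t₀..t₁, ⟪polyEval (q + 1) c t, polyEval (q + 1) w t⟫
        = - ⟪e, polyEval (q + 1) w t₀⟫ := by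
    intro w hw
    have h := hu1 (fun i => Q (w i)) (fun i hi => by simp [hw i hi])
    simp only [← polyEval_map, hQs, map_sub] at h
    have hV1 : Q (polyEval (q + 1) (dC v) t₀) = 0 := by
      rw [polyEval_map]; simp [polyEval, dC, hQv]
    have hV2 : ∀ t, Q (polyEval (q + 1) (dC (dC v)) t) = 0 := by
      intro t
      rw [polyEval_map]; simp [polyEval, dC, hQv]
    simp only [hV1, hV2, sub_zero, zero_sub, inner_neg_left] at h
    simp only [polyEval_map _ (dC (dC u))] at h
    exact h
  set κ : ℕ → ℝ := fun i => ⟪c i, e⟫ / ⟪e, e⟫ with hκ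
  have hκz : ∀ i, q ≤ i → κ i = 0 := by
    intro i hi; simp [hκ, hcz i hi]
  set D : ℕ → H := fun i => c i - κ i • e with hD
  have hDe : ∀ i, ⟪e, D i⟫ = 0 := by
    intro i
    simp only [hD, hκ, inner_sub_right, real_inner_smul_right]
    by_cases h0 : e = 0
    · simp [h0]
    · have : ⟪e, e⟫ ≠ 0 := fun h => h0 (inner_self_eq_zero.1 h)
      rw [div_mul_cancel₀ _ this, real_inner_comm, sub_self]
  have hDet : ∀ t, ⟪e, polyEval (q+1) D t⟫ = 0 := by
    intro t
    simp [polyEval, inner_sum, real_inner_smul_right, hDe]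
  have hDt : ∀ t, polyEval (q+1) c t
      = polyEval (q+1) D t + (scalPoly (q+1) κ).eval t • e := by
    intro t
    rw [← polyEval_smul]
    simp only [polyEval, ← Finset.sum_add_distrib, ← smul_add]
    simp [hD]
  have hDint := hweak D (fun i hi => by simp [hD, hcz i hi, hκz i hi])
  simp only [hDet, neg_zero, hDt, inner_add_left, real_inner_smul_left, mul_zero, add_zero]
    at hDint
  have hDz : ∀ t ∈ Set.Icc t₀ t₁, polyEval (q+1) D t = 0 := by
    intro s hs
    by_contra hne
    have hcont : Continuous fun t => ⟪polyEval (q+1) D t, polyEval (q+1) D t⟫ :=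
      (polyEval_continuous _ _).inner (polyEval_continuous _ _)
    have hpos : 0 < ∫ t in t₀..t₁, ⟪polyEval (q+1) D t, polyEval (q+1) D t⟫ := by
      refine intervalIntegral.integral_pos h01 hcont.continuousOn
        (fun x _ => real_inner_self_nonneg) ⟨s, hs, ?_⟩
      exact real_inner_self_pos.2 hne
    linarith
  have hceq : ∀ i, c i = κ i • e := by
    intro i
    by_cases hi : i ≤ q + 1
    · have := coeff_zero_of_polyEval (q+1) D _ (Set.Icc_infinite h01) hDz i hi
      exact sub_eq_zero.1 this
    · rw [hcz i (by omega), hκz i (by omega), zero_smul]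
  have hthird : Q (polyEval (q + 1) (dC (dC (dC u))) t)
      = (derivative (scalPoly (q+1) κ)).eval t • e := by
    have hder : derivative (scalPoly (q+1) κ)
        = scalPoly (q+1) (fun i => ((i:ℝ)+1) * κ (i+1)) := by
      ext n
      rw [coeff_derivative, scalPoly_coeff, scalPoly_coeff]
      by_cases h1 : n + 1 ≤ q + 1
      · rw [if_pos h1, if_pos (by omega)]; ring
      · rw [if_neg h1, hκz (n+1) (by omega)]; simp
    rw [hder, ← polyEval_smul, polyEval_map]
    congr 1
    funext i
    have : Q (dC (dC (dC u)) i) = ((i:ℝ)+1) • c (i+1) := by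
      rw [dC, map_smul]
    rw [this, hceq, smul_smul]
  by_cases he0 : e = 0
  · refine ⟨0, ?_, ?_⟩
    · rw [← hQa, hthird, he0]; simp
    · have : (2:ℝ) ≤ q := by exact_mod_cast hq
      rw [abs_zero]
      have h1 : 0 ≤ (q:ℝ) - 1 := by linarith
      positivity
  refine ⟨(derivative (scalPoly (q+1) κ)).eval t, by rw [← hQa, hthird], ?_⟩
  obtain ⟨m, rfl⟩ : ∃ m, q = m + 2 := ⟨q - 2, by omega⟩
  have hee : ⟪e, e⟫ ≠ 0 := fun h => he0 (inner_self_eq_zero.1 h)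
  have hb := kernel_bound' m t₀ t₁ h01 (-(scalPoly (m+2+1) κ)) ?_ ?_ t ht
  · rw [derivative_neg, eval_neg, abs_neg] at hb
    refine hb.trans (le_of_eq ?_)
    push_cast; ring
  · rw [natDegree_neg, natDegree_le_iff_coeff_eq_zero]
    intro N hN
    rw [scalPoly_coeff, hκz N (by omega)]; simp
  · intro r hr
    have hrr : scalPoly (m+2+1) r.coeff = r := by
      ext n
      rw [scalPoly_coeff]
      split_ifs with h
      · rfl
      · rw [coeff_eq_zero_of_natDegree_lt (by omega)]
    have h := hweak (fun i => r.coeff i • e) (fun i hi => by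
      rw [coeff_eq_zero_of_natDegree_lt (by omega), zero_smul])
    have hcf : c = fun i => κ i • e := funext hceq
    rw [hcf] at h
    simp only [polyEval_smul, hrr, real_inner_smul_left, real_inner_smul_right] at h
    simp only [← mul_assoc, intervalIntegral.integral_mul_const] at h
    simp only [eval_neg, neg_mul, intervalIntegral.integral_neg]
    have h' : ((∫ t in t₀..t₁, (scalPoly (m+2+1) κ).eval t * r.eval t) + r.eval t₀) * ⟪e, e⟫
        = 0 := by
      simp only [mul_comm ((scalPoly (m+2+1) κ).eval _) (r.eval _)]
      rw [add_mul, h]; ring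
    rcases mul_eq_zero.1 h' with h'' | h''
    · linarith
    · exact absurd h'' hee

end vector

/-- Spatial error of the time reconstruction, third time derivative (Lemma 4.3, ℓ = 3):
`sup_{t ∈ [t₀,t₁]} ‖ρ₀ (Û - PÛ)'''(t)‖ ≤ 8√6 q(q+1)³ τ⁻² ‖ρ₀ P^⊥ w₀‖`, where `M` is the
multiplication operator by the nonnegative essentially bounded weight `ρ₀` on `L²(X, μ)`. -/
theorem spatial_error_time_reconstruction_third_deriv
    {X : Type*} [MeasurableSpace X] (μ : Measure X)
    (ρ₀ : X → ℝ) (hρ_meas : Measurable ρ₀) (hρ_nn : ∀ x, 0 ≤ ρ₀ x)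
    (hρ_bd : ∃ C : ℝ, ∀ᵐ x ∂μ, ρ₀ x ≤ C)
    (M : Lp ℝ 2 μ →ₗ[ℝ] Lp ℝ 2 μ)
    (hM : ∀ f : Lp ℝ 2 μ, (M f : X → ℝ) =ᵐ[μ] fun x => ρ₀ x * f x)
    (F : Submodule ℝ (Lp ℝ 2 μ)) (hF : IsClosed (F : Set (Lp ℝ 2 μ)))
    (P : Lp ℝ 2 μ →L[ℝ] Lp ℝ 2 μ) (hP : IsOrthProj F P)
    (t₀ t₁ : ℝ) (h01 : t₀ < t₁) (q : ℕ) (hq : 2 ≤ q)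
    (v : ℕ → Lp ℝ 2 μ) (hv : ∀ i, q < i → v i = 0)
    (hvF : ∀ t : ℝ, polyEval (q + 1) v t ∈ F)
    (w₀ : Lp ℝ 2 μ) (u : ℕ → Lp ℝ 2 μ)
    (hu : IsTimeRecon t₀ t₁ q v (polyEval (q + 1) (dC v) t₀ - w₀) u) :
    (⨆ t : Set.Icc t₀ t₁,
        ‖M (polyEval (q + 1) (dC (dC (dC u))) t - P (polyEval (q + 1) (dC (dC (dC u))) t))‖)
      ≤ 8 * Real.sqrt 6 * (q : ℝ) * ((q : ℝ) + 1) ^ 3 * ((t₁ - t₀)⁻¹) ^ 2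
        * ‖M (w₀ - P w₀)‖ := by
  have hq2 : (2:ℝ) ≤ q := by exact_mod_cast hq
  apply Real.iSup_le
  · rintro ⟨t, ht⟩
    obtain ⟨a, ha, hab⟩ := core F P hP t₀ t₁ h01 q hq v hv hvF w₀ u hu t ht
    simp only
    rw [ha, map_smul, norm_smul, Real.norm_eq_abs]
    refine mul_le_mul_of_nonneg_right (hab.trans ?_) (norm_nonneg _)
    refine mul_le_mul_of_nonneg_right ?_ (sq_nonneg _)
    have h6 : (1:ℝ) ≤ Real.sqrt 6 := Real.one_le_sqrt.2 (by norm_num)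
    have h1 : ((q:ℝ)-1)*((q:ℝ)+1)*(q:ℝ)^2/2 ≤ 8 * 1 * (q:ℝ) * ((q:ℝ)+1)^3 := by
      have h2 : ((q:ℝ)-1) * (q:ℝ) ≤ ((q:ℝ)+1)^2 := by nlinarith
      have h3 : 0 ≤ (q:ℝ) * ((q:ℝ)+1) := by positivity
      have h4 : 0 ≤ (q:ℝ) * ((q:ℝ)+1)^3 := by positivity
      nlinarith [mul_le_mul_of_nonneg_left h2 h3]
    refine h1.trans ?_
    gcongr
  · positivity
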